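/- Let Q(x,y) = a x² + b x y + c y² be a positive definite real binary quadratic form (a > 0, Δ := 4ac − b² > 0) and let Z_Q(s) = ∑_{(m,n) ∈ ℤ², (m,n) ≠ (0,0)} Q(m,n)^{−s} for Re s > 1. Then there exists a function F : ℂ → ℂ, holomorphic on ℂ ∖ {1}, such that F(s) = Z_Q(s) for all s with Re s > 1, the function s ↦ (s − 1)·F(s) extends holomorphically across s = 1 with nonzero value at s = 1 (so F has a simple pole at s = 1), and F satisfies the functional equation (√Δ/(2π))^s · Γ(s) · F(s) = (√Δ/(2π))^{1−s} · Γ(1−s) · F(1−s) for all s ∈ ℂ ∖ ℤ. -/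

import Mathlib

/-- The Epstein zeta function of the positive definite binary quadratic form
`ax² + bxy + cy²` at a complex argument `s`: `Z_Q(s) = ∑_{(m,n) ≠ (0,0)} Q(m,n)^{−s}`. -/
noncomputable def epsteinZetaC (a b c : ℝ) (s : ℂ) : ℂ :=
  ∑' p : {p : ℤ × ℤ // p ≠ 0},
    ((a * (p.1.1 : ℝ) ^ 2 + b * (p.1.1 : ℝ) * (p.1.2 : ℝ) + c * (p.1.2 : ℝ) ^ 2 : ℝ) : ℂ)
      ^ (-s)

/-!
Put `A = √Δ / (2π)` and `θ(t) = ∑ exp (-Q(m, n) t / A)`. Poisson summation in the variable `m` alone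
turns `θ(t)` into `√(π A / (a t))` times a double series whose terms are unchanged when the two
summation indices are swapped and `t` is replaced by `1 / t`. Hence `θ(1 / t) = t θ(t)`, and the
Mellin transform `Λ(s) = A ^ s Γ(s) Z_Q(s)` of `θ - 1` continues to `ℂ` with `Λ(1 - s) = Λ(s)` and
simple poles at `0` and `1`. Therefore `ξ(s) = s (s - 1) Λ(s)` is entire with `ξ(1) = 1`, and since
`s Γ(s) = Γ(s + 1)` the continuation of `Z_Q` can be written as
`A ^ (-s) ξ(s) / (Γ(s + 1) (s - 1))`, which is visibly holomorphic away from `1`, even at `0`.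
-/

namespace EpsteinZeta

open Filter Set Asymptotics
open scoped Real

section ExponentialSeries

variable {ι : Type*} {q : ι → ℝ}

theorem summable_exp_neg_of_summable_inv_pow (n : ℕ) (hq : ∀ᶠ i in cofinite, 0 < q i)
    (hs : Summable fun i ↦ (q i ^ n)⁻¹) : Summable fun i ↦ Real.exp (-q i) := by
  refine (hs.mul_left (n.factorial : ℝ)).of_norm_bounded_eventually ?_
  filter_upwards [hq] with i hi
  have hexp := Real.pow_div_factorial_le_exp (q i) hi.le n
  rw [Real.norm_eq_abs, Real.abs_exp, Real.exp_neg, ← div_eq_mul_inv, ← inv_div]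
  gcongr

theorem continuousOn_tsum_exp_neg_mul (hq : ∀ i, 0 ≤ q i)
    (hs : ∀ t, 0 < t → Summable fun i ↦ Real.exp (-q i * t)) :
    ContinuousOn (fun t ↦ ∑' i, Real.exp (-q i * t)) (Ioi 0) := by
  intro t (ht : 0 < t)
  have hcont : ContinuousOn (fun t ↦ ∑' i, Real.exp (-q i * t)) (Ioi (t / 2)) := by
    refine continuousOn_tsum (fun i ↦ by fun_prop) (hs (t / 2) (half_pos ht)) ?_
    intro i x (hx : t / 2 < x)
    rw [Real.norm_eq_abs, Real.abs_exp, Real.exp_le_exp]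
    nlinarith [hq i]
  exact (hcont.continuousAt (Ioi_mem_nhds (half_lt_self ht))).continuousWithinAt

theorem isBigO_tsum_exp_neg_mul {δ : ℝ} (hq : ∀ i, δ ≤ q i)
    (hs : Summable fun i ↦ Real.exp (-q i)) :
    (fun t ↦ ∑' i, Real.exp (-q i * t)) =O[atTop] fun t ↦ Real.exp (-δ * t) := by
  refine .of_bound (Real.exp δ * ∑' i, Real.exp (-q i)) ?_
  filter_upwards [eventually_ge_atTop 1] with t ht
  rw [Real.norm_eq_abs (Real.exp _), Real.abs_exp, mul_right_comm, ← tsum_mul_left]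
  refine tsum_of_norm_bounded (hs.mul_left _).hasSum fun i ↦ ?_
  rw [Real.norm_eq_abs, Real.abs_exp, ← Real.exp_add, ← Real.exp_add, Real.exp_le_exp]
  nlinarith [hq i]

end ExponentialSeries

theorem one_le_norm_of_ne_zero {p : ℤ × ℤ} (hp : p ≠ 0) : 1 ≤ ‖p‖ := by
  have one_le_norm_int {n : ℤ} (hn : n ≠ 0) : 1 ≤ ‖n‖ := by
    rw [Int.norm_eq_abs]
    exact_mod_cast Int.one_le_abs hn
  rw [Prod.norm_def, le_max_iff]
  by_contra! h
  exact hp (Prod.ext (not_imp_comm.1 one_le_norm_int h.1.not_ge)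
    (not_imp_comm.1 one_le_norm_int h.2.not_ge))

theorem summable_norm_rpow_int_prod {r : ℝ} (hr : 2 < r) :
    Summable fun p : ℤ × ℤ ↦ ‖p‖ ^ (-r) := by
  refine ((finTwoArrowEquiv ℤ).symm.summable_iff.2
    (EisensteinSeries.summable_one_div_norm_rpow hr)).congr fun p ↦ ?_
  simp [EisensteinSeries.norm_eq_max_natAbs, Prod.norm_def, Int.norm_eq_abs]

variable {a b c t : ℝ} (ha : 0 < a) (hΔ : 0 < 4 * a * c - b ^ 2)

section BinaryForm

/-- The value `Q(m, n) = a m² + b m n + c n²` of a binary quadratic form at a lattice point. -/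
noncomputable def binaryForm (a b c : ℝ) (p : ℤ × ℤ) : ℝ :=
  a * (p.1 : ℝ) ^ 2 + b * (p.1 : ℝ) * (p.2 : ℝ) + c * (p.2 : ℝ) ^ 2

/-- The number `A = √Δ / (2π)`, whose powers normalize the functional equation. -/
noncomputable def scale (a b c : ℝ) : ℝ :=
  √(4 * a * c - b ^ 2) / (2 * π)

@[simp]
theorem binaryForm_zero : binaryForm a b c 0 = 0 := by
  simp [binaryForm]

include hΔ in
theorem scale_pos : 0 < scale a b c := by
  unfold scale
  positivity

include hΔ in
theorem four_mul_pi_sq_mul_scale_sq : 4 * π ^ 2 * scale a b c ^ 2 = 4 * a * c - b ^ 2 := by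
  rw [scale, div_pow, Real.sq_sqrt hΔ.le]
  field_simp
  norm_num

include ha hΔ

theorem exists_mul_norm_sq_le_binaryForm :
    ∃ δ : ℝ, 0 < δ ∧ ∀ p : ℤ × ℤ, δ * ‖p‖ ^ 2 ≤ binaryForm a b c p := by
  have hc : 0 < c := by
    refine pos_of_mul_pos_right (a := 4 * a) ?_ (by positivity)
    linarith [sq_nonneg b]
  refine ⟨(4 * a * c - b ^ 2) / (4 * (a + c)), by positivity, fun p ↦ ?_⟩
  rw [div_mul_eq_mul_div, div_le_iff₀ (by positivity), binaryForm]
  -- `4 a Q(m, n) = (2 a m + b n)² + Δ n²` and `4 c Q(m, n) = (2 c n + b m)² + Δ m²`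
  rcases max_choice ‖p.1‖ ‖p.2‖ with h | h <;>
    rw [Prod.norm_def, h, Int.norm_eq_abs, sq_abs] <;>
    nlinarith [sq_nonneg (2 * a * p.1 + b * p.2), sq_nonneg (2 * c * p.2 + b * p.1)]

theorem exists_le_binaryForm :
    ∃ δ : ℝ, 0 < δ ∧ ∀ p : ℤ × ℤ, p ≠ 0 → δ ≤ binaryForm a b c p := by
  obtain ⟨δ, hδ, hle⟩ := exists_mul_norm_sq_le_binaryForm ha hΔ
  refine ⟨δ, hδ, fun p hp ↦ (le_mul_of_one_le_right hδ.le ?_).trans (hle p)⟩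
  exact one_le_pow₀ (one_le_norm_of_ne_zero hp)

theorem binaryForm_pos {p : ℤ × ℤ} (hp : p ≠ 0) : 0 < binaryForm a b c p := by
  obtain ⟨δ, hδ, hle⟩ := exists_le_binaryForm ha hΔ
  exact hδ.trans_le (hle p hp)

theorem binaryForm_nonneg (p : ℤ × ℤ) : 0 ≤ binaryForm a b c p := by
  rcases eq_or_ne p 0 with rfl | hp
  · exact binaryForm_zero.ge
  · exact (binaryForm_pos ha hΔ hp).le

theorem summable_inv_binaryForm_rpow {σ : ℝ} (hσ : 1 < σ) :
    Summable fun p : ℤ × ℤ ↦ (binaryForm a b c p ^ σ)⁻¹ := by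
  obtain ⟨δ, hδ, hle⟩ := exists_mul_norm_sq_le_binaryForm ha hΔ
  have hnorm := summable_norm_rpow_int_prod (r := 2 * σ) (by linarith)
  refine (hnorm.mul_left (δ ^ σ)⁻¹).of_nonneg_of_le
    (fun p ↦ inv_nonneg.2 (Real.rpow_nonneg (binaryForm_nonneg ha hΔ p) σ)) fun p ↦ ?_
  rcases eq_or_ne p 0 with rfl | hp
  · rw [binaryForm_zero, Real.zero_rpow (by linarith), inv_zero]
    positivity
  · have hp' : 0 < ‖p‖ := norm_pos_iff.2 hp
    rw [Real.rpow_neg hp'.le, ← mul_inv, Real.rpow_mul hp'.le, Real.rpow_two,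
      ← Real.mul_rpow hδ.le (by positivity)]
    gcongr
    exact hle p

theorem summable_exp_neg_binaryForm_mul (ht : 0 < t) :
    Summable fun p : ℤ × ℤ ↦ Real.exp (-binaryForm a b c p * t) := by
  simp_rw [neg_mul]
  refine summable_exp_neg_of_summable_inv_pow 2 ?_ ?_
  · filter_upwards [(finite_singleton (0 : ℤ × ℤ)).compl_mem_cofinite] with p hp
    exact mul_pos (binaryForm_pos ha hΔ hp) ht
  · simp_rw [mul_pow, mul_inv]
    simpa only [Real.rpow_two] using
      (summable_inv_binaryForm_rpow ha hΔ one_lt_two).mul_right (t ^ 2)⁻¹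

end BinaryForm

section Theta

/-- The theta series `θ(t) = ∑ exp (-Q(m, n) t / A)`, rescaled so that `t ↦ 1 / t` is its symmetry
and the Mellin transform of `θ - 1` is the completed zeta function `A ^ s Γ(s) Z_Q(s)`. -/
noncomputable def theta (a b c t : ℝ) : ℝ :=
  ∑' p : ℤ × ℤ, Real.exp (-(binaryForm a b c p / scale a b c) * t)

include ha hΔ

theorem summable_theta (ht : 0 < t) :
    Summable fun p : ℤ × ℤ ↦ Real.exp (-(binaryForm a b c p / scale a b c) * t) := by
  simpa only [neg_mul, div_mul_eq_mul_div, mul_div_assoc] using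
    summable_exp_neg_binaryForm_mul ha hΔ (div_pos ht (scale_pos hΔ))

theorem hasSum_theta_sub_one (ht : 0 < t) :
    HasSum (fun p : {p : ℤ × ℤ // p ≠ 0} ↦ Real.exp (-(binaryForm a b c p / scale a b c) * t))
      (theta a b c t - 1) := by
  have hzero : HasSum (fun p : ({0} : Set (ℤ × ℤ)) ↦
      Real.exp (-(binaryForm a b c p / scale a b c) * t)) 1 := by
    simpa using hasSum_fintype fun p : ({0} : Set (ℤ × ℤ)) ↦
      Real.exp (-(binaryForm a b c p / scale a b c) * t)
  exact hzero.hasSum_iff_compl.1 (summable_theta ha hΔ ht).hasSum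

theorem continuousOn_theta : ContinuousOn (theta a b c) (Ioi 0) :=
  continuousOn_tsum_exp_neg_mul
    (fun p ↦ div_nonneg (binaryForm_nonneg ha hΔ p) (scale_pos hΔ).le) fun _ ↦ summable_theta ha hΔ

theorem isBigO_theta_sub_one (r : ℝ) : (theta a b c · - 1) =O[atTop] (· ^ r) := by
  have hA := scale_pos hΔ
  obtain ⟨δ, hδ, hle⟩ := exists_le_binaryForm ha hΔ
  have hexp : (theta a b c · - 1) =O[atTop] fun t ↦ Real.exp (-(δ / scale a b c) * t) := by
    refine (isBigO_tsum_exp_neg_mul (q := fun p : {p : ℤ × ℤ // p ≠ 0} ↦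
      binaryForm a b c p / scale a b c) (fun p ↦ ?_) ?_).congr' ?_ .rfl
    · gcongr
      exact hle p p.2
    · simpa using (hasSum_theta_sub_one ha hΔ one_pos).summable
    · filter_upwards [eventually_gt_atTop 0] with t ht
      exact (hasSum_theta_sub_one ha hΔ ht).tsum_eq
  exact hexp.trans (isLittleO_exp_neg_mul_rpow_atTop (div_pos hδ hA) r).isBigO

end Theta

section PoissonSummation

/-- The summand of the double series obtained from `θ(t)` by Poisson summation in the first
variable; the point `(n, k)` consists of the second variable `n` and the frequency `k` dual to the
first one. -/
noncomputable def poissonTerm (a b c t : ℝ) (p : ℤ × ℤ) : ℂ :=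
  Complex.exp (-binaryForm (π ^ 2 * scale a b c * t / a) 0 (π ^ 2 * scale a b c / (a * t)) p +
    (π * b * p.1 * p.2 / a : ℝ) * Complex.I)

theorem exp_neg_binaryForm_eq_mul (m n : ℤ) :
    (Real.exp (-(binaryForm a b c (m, n) / scale a b c) * t) : ℂ) =
      Complex.exp (-(c * n ^ 2 * t / scale a b c)) *
        Complex.exp (-π * (a * t / (π * scale a b c)) * m ^ 2 +
          2 * π * (-(b * n * t) / (2 * π * scale a b c)) * m) := by
  have hπ : (π : ℂ) ≠ 0 := mod_cast Real.pi_ne_zero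
  rw [← Complex.exp_add, Complex.ofReal_exp, binaryForm]
  push_cast
  congr 1
  field_simp
  ring

theorem poissonTerm_one_div_swap (p : ℤ × ℤ) :
    poissonTerm a b c (1 / t) p.swap = poissonTerm a b c t p := by
  simp only [poissonTerm, binaryForm, Prod.fst_swap, Prod.snd_swap]
  congr 1
  push_cast
  field_simp
  ring

include ha hΔ

theorem summable_poissonTerm (ht : 0 < t) : Summable (poissonTerm a b c t) := by
  have hA := scale_pos hΔ
  have hsum := summable_exp_neg_binaryForm_mul
    (a := π ^ 2 * scale a b c * t / a) (b := 0) (c := π ^ 2 * scale a b c / (a * t))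
    (by positivity) (by rw [zero_pow two_ne_zero, sub_zero]; positivity) one_pos
  refine hsum.of_norm_bounded fun p ↦ le_of_eq ?_
  rw [poissonTerm, Complex.norm_exp, Complex.add_re, Complex.re_ofReal_mul, Complex.I_re,
    mul_zero, add_zero, mul_one, ← Complex.ofReal_neg, Complex.ofReal_re]

theorem poissonTerm_eq_mul (ht : t ≠ 0) (n k : ℤ) :
    poissonTerm a b c t (n, k) =
      Complex.exp (-(c * n ^ 2 * t / scale a b c)) *
        Complex.exp (-π / (a * t / (π * scale a b c)) *
          (k + Complex.I * (-(b * n * t) / (2 * π * scale a b c))) ^ 2) := by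
  have hA : (scale a b c : ℂ) ≠ 0 := mod_cast (scale_pos hΔ).ne'
  have hπ : (π : ℂ) ≠ 0 := mod_cast Real.pi_ne_zero
  have ha' : (a : ℂ) ≠ 0 := mod_cast ha.ne'
  have ht' : (t : ℂ) ≠ 0 := mod_cast ht
  have hdisc : (4 * π ^ 2 * scale a b c ^ 2 : ℂ) = 4 * a * c - b ^ 2 := by
    exact_mod_cast four_mul_pi_sq_mul_scale_sq hΔ
  rw [poissonTerm, ← Complex.exp_add, binaryForm]
  push_cast
  congr 1
  field_simp
  ring_nf
  rw [Complex.I_sq]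
  linear_combination -(n ^ 2 * t ^ 2) * hdisc

theorem tsum_exp_neg_binaryForm_left (ht : 0 < t) (n : ℤ) :
    ∑' m : ℤ, (Real.exp (-(binaryForm a b c (m, n) / scale a b c) * t) : ℂ) =
      (√(a * t / (π * scale a b c)) : ℂ)⁻¹ * ∑' k : ℤ, poissonTerm a b c t (n, k) := by
  have hx : 0 < a * t / (π * scale a b c) := by
    have := scale_pos hΔ
    positivity
  have hsqrt : ((a * t / (π * scale a b c) : ℝ) : ℂ) ^ (1 / 2 : ℂ) =
      √(a * t / (π * scale a b c)) := by
    rw [Real.sqrt_eq_rpow, Complex.ofReal_cpow hx.le]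
    norm_num
  have hpoisson := Complex.tsum_exp_neg_quadratic (a := (a * t / (π * scale a b c) : ℝ))
    (by rwa [Complex.ofReal_re]) (-(b * n * t) / (2 * π * scale a b c))
  rw [hsqrt] at hpoisson
  push_cast at hpoisson
  simp_rw [exp_neg_binaryForm_eq_mul, poissonTerm_eq_mul ha hΔ ht.ne', tsum_mul_left, hpoisson]
  ring

theorem theta_eq_tsum_poissonTerm (ht : 0 < t) :
    (theta a b c t : ℂ) =
      (√(a * t / (π * scale a b c)) : ℂ)⁻¹ * ∑' p : ℤ × ℤ, poissonTerm a b c t p := by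
  have hsum : Summable fun p : ℤ × ℤ ↦
      (Real.exp (-(binaryForm a b c p / scale a b c) * t) : ℂ) :=
    Complex.summable_ofReal.2 (summable_theta ha hΔ ht)
  rw [theta, Complex.ofReal_tsum, ← (Equiv.prodComm ℤ ℤ).tsum_eq,
    Summable.tsum_prod (by exact hsum.prod_symm), (summable_poissonTerm ha hΔ ht).tsum_prod,
    ← tsum_mul_left]
  exact tsum_congr fun n ↦ tsum_exp_neg_binaryForm_left ha hΔ ht n

theorem theta_one_div (ht : 0 < t) : theta a b c (1 / t) = t * theta a b c t := by
  have hA := scale_pos hΔ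
  have hsqrt : √(a * t / (π * scale a b c)) = t * √(a * (1 / t) / (π * scale a b c)) := by
    rw [← Real.sqrt_sq ht.le, ← Real.sqrt_mul (sq_nonneg t), Real.sqrt_sq ht.le]
    congr 1
    field_simp
  have hswap : ∑' p, poissonTerm a b c (1 / t) p = ∑' p, poissonTerm a b c t p := by
    rw [← (Equiv.prodComm ℤ ℤ).tsum_eq]
    exact tsum_congr poissonTerm_one_div_swap
  rw [← Complex.ofReal_inj, Complex.ofReal_mul, theta_eq_tsum_poissonTerm ha hΔ ht,
    theta_eq_tsum_poissonTerm ha hΔ (one_div_pos.2 ht), hswap, hsqrt, Complex.ofReal_mul, mul_inv,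
    ← mul_assoc, mul_inv_cancel_left₀ (by exact_mod_cast ht.ne')]

end PoissonSummation

section Continuation

include ha hΔ

/-- The theta series as its own partner in the functional equation `θ(1 / t) = t θ(t)`, packaged for
Mathlib's theory of Mellin transforms of such functions. -/
noncomputable def thetaPair : WeakFEPair ℂ where
  f t := theta a b c t
  g t := theta a b c t
  k := 1
  ε := 1
  f₀ := 1
  g₀ := 1
  hf_int := (Complex.continuous_ofReal.comp_continuousOn
    (continuousOn_theta ha hΔ)).locallyIntegrableOn measurableSet_Ioi
  hg_int := (Complex.continuous_ofReal.comp_continuousOn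
    (continuousOn_theta ha hΔ)).locallyIntegrableOn measurableSet_Ioi
  hk := one_pos
  hε := one_ne_zero
  h_feq t ht := by
    rw [theta_one_div ha hΔ ht]
    simp
  hf_top r := mod_cast Complex.isBigO_ofReal_left.2 (isBigO_theta_sub_one ha hΔ r)
  hg_top r := mod_cast Complex.isBigO_ofReal_left.2 (isBigO_theta_sub_one ha hΔ r)

theorem thetaPair_symm : (thetaPair ha hΔ).symm = thetaPair ha hΔ := by
  simp [WeakFEPair.symm, thetaPair]

theorem thetaPair_Λ_eq_epsteinZetaC {s : ℂ} (hs : 1 < s.re) :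
    (thetaPair ha hΔ).Λ s = (scale a b c : ℂ) ^ s * Complex.Gamma s * epsteinZetaC a b c s := by
  have hA := scale_pos hΔ
  have hterm (p : {p : ℤ × ℤ // p ≠ 0}) :
      (scale a b c : ℂ) ^ s * Complex.Gamma s * (binaryForm a b c p : ℂ) ^ (-s) =
        Complex.Gamma s * 1 / ((binaryForm a b c p / scale a b c : ℝ) : ℂ) ^ s := by
    rw [Complex.ofReal_div, Complex.div_cpow_ofReal_nonneg (binaryForm_nonneg ha hΔ p) hA.le,
      Complex.cpow_neg]
    simp [field]
  have hmellin : HasSum (fun p : {p : ℤ × ℤ // p ≠ 0} ↦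
      Complex.Gamma s * 1 / ((binaryForm a b c p / scale a b c : ℝ) : ℂ) ^ s)
      (mellin (fun t ↦ (theta a b c t : ℂ) - 1) s) := by
    refine hasSum_mellin (fun p ↦ .inr (div_pos (binaryForm_pos ha hΔ p.2) hA)) (by linarith)
      (fun t ht ↦ ?_) ?_
    · simpa using Complex.hasSum_ofReal.2 (hasSum_theta_sub_one ha hΔ ht)
    · refine (((summable_inv_binaryForm_rpow ha hΔ hs).mul_left (scale a b c ^ s.re)).subtype
        {p : ℤ × ℤ | p ≠ 0}).congr fun p ↦ ?_
      rw [norm_one, Real.div_rpow (binaryForm_nonneg ha hΔ _) hA.le, one_div_div, div_eq_mul_inv]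
      rfl
  calc (thetaPair ha hΔ).Λ s
      = mellin (fun t ↦ (theta a b c t : ℂ) - 1) s := ((thetaPair ha hΔ).hasMellin hs).2.symm
    _ = ∑' p : {p : ℤ × ℤ // p ≠ 0},
          (scale a b c : ℂ) ^ s * Complex.Gamma s * (binaryForm a b c p : ℂ) ^ (-s) := by
      simp_rw [hterm, hmellin.tsum_eq]
    _ = _ := tsum_mul_left

/-- The entire function `ξ(s) = s (s - 1) Λ(s)`, where `Λ(s) = A ^ s Γ(s) Z_Q(s)` is the completed
zeta function, written in terms of the entire part of `Λ`. -/
noncomputable def xi (s : ℂ) : ℂ :=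
  s * (s - 1) * (thetaPair ha hΔ).Λ₀ s + 1

theorem differentiable_xi : Differentiable ℂ (xi ha hΔ) := by
  have := (thetaPair ha hΔ).differentiable_Λ₀
  unfold xi
  fun_prop

theorem xi_one_sub (s : ℂ) : xi ha hΔ (1 - s) = xi ha hΔ s := by
  have hΛ₀ : (thetaPair ha hΔ).Λ₀ (1 - s) = (thetaPair ha hΔ).Λ₀ s := by
    have hfe := (thetaPair ha hΔ).functional_equation₀ s
    rw [thetaPair_symm] at hfe
    simpa [thetaPair] using hfe
  rw [xi, xi, hΛ₀]
  ring

theorem xi_eq_mul_Λ {s : ℂ} (hs0 : s ≠ 0) (hs1 : s ≠ 1) :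
    xi ha hΔ s = s * (s - 1) * (thetaPair ha hΔ).Λ s := by
  have hΛ₀ : (thetaPair ha hΔ).Λ₀ s = (thetaPair ha hΔ).Λ s + 1 / s + 1 / (1 - s) := by
    simpa [thetaPair] using (thetaPair ha hΔ).Λ₀_eq s
  have hs1' : 1 - s ≠ 0 := sub_ne_zero.2 hs1.symm
  rw [xi, hΛ₀]
  field_simp
  ring

/-- The entire function extending `(s - 1) Z_Q(s)`. Dividing `ξ(s)` by `Γ(s + 1)` instead of
`s Γ(s)` avoids the removable singularity at `0`. -/
noncomputable def subOneMulZeta (s : ℂ) : ℂ :=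
  (scale a b c : ℂ) ^ (-s) * (Complex.Gamma (s + 1))⁻¹ * xi ha hΔ s

theorem differentiable_subOneMulZeta : Differentiable ℂ (subOneMulZeta ha hΔ) := by
  have hA : (scale a b c : ℂ) ≠ 0 := mod_cast (scale_pos hΔ).ne'
  have hpow : Differentiable ℂ fun s : ℂ ↦ (scale a b c : ℂ) ^ (-s) :=
    differentiable_neg.const_cpow (.inl hA)
  have hGamma : Differentiable ℂ fun s : ℂ ↦ (Complex.Gamma (s + 1))⁻¹ :=
    Complex.differentiable_one_div_Gamma.comp (differentiable_id.add_const 1)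
  exact (hpow.mul hGamma).mul (differentiable_xi ha hΔ)

theorem subOneMulZeta_one : subOneMulZeta ha hΔ 1 = (scale a b c : ℂ)⁻¹ := by
  simp [subOneMulZeta, xi, one_add_one_eq_two, Complex.cpow_neg_one]

theorem completed_subOneMulZeta {s : ℂ} (hs : Complex.Gamma s ≠ 0) :
    (scale a b c : ℂ) ^ s * Complex.Gamma s * subOneMulZeta ha hΔ s = xi ha hΔ s / s := by
  have hs0 : s ≠ 0 := fun h ↦ hs (h ▸ Complex.Gamma_zero)
  have hA : (scale a b c : ℂ) ^ s ≠ 0 :=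
    Complex.cpow_ne_zero_iff.2 (.inl (mod_cast (scale_pos hΔ).ne'))
  rw [subOneMulZeta, Complex.Gamma_add_one s hs0, Complex.cpow_neg]
  field_simp

theorem subOneMulZeta_eq {s : ℂ} (hs : 1 < s.re) :
    subOneMulZeta ha hΔ s = (s - 1) * epsteinZetaC a b c s := by
  have hs0 : s ≠ 0 := by rintro rfl; norm_num at hs
  have hs1 : s ≠ 1 := by rintro rfl; norm_num at hs
  have hGamma := Complex.Gamma_ne_zero_of_re_pos (zero_lt_one.trans hs)
  have hA : (scale a b c : ℂ) ^ s ≠ 0 :=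
    Complex.cpow_ne_zero_iff.2 (.inl (mod_cast (scale_pos hΔ).ne'))
  refine mul_left_cancel₀ (mul_ne_zero hA hGamma) ?_
  rw [completed_subOneMulZeta ha hΔ hGamma, xi_eq_mul_Λ ha hΔ hs0 hs1,
    thetaPair_Λ_eq_epsteinZetaC ha hΔ hs]
  field_simp

/-- The meromorphic continuation of the Epstein zeta function. -/
noncomputable def continuation (s : ℂ) : ℂ :=
  subOneMulZeta ha hΔ s / (s - 1)

theorem differentiableOn_continuation : DifferentiableOn ℂ (continuation ha hΔ) {1}ᶜ :=
  (differentiable_subOneMulZeta ha hΔ).differentiableOn.div (by fun_prop) fun _ ↦ sub_ne_zero.2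

theorem sub_one_mul_continuation {s : ℂ} (hs : s ≠ 1) :
    (s - 1) * continuation ha hΔ s = subOneMulZeta ha hΔ s :=
  mul_div_cancel₀ _ (sub_ne_zero.2 hs)

theorem continuation_eq_epsteinZetaC {s : ℂ} (hs : 1 < s.re) :
    continuation ha hΔ s = epsteinZetaC a b c s := by
  have hs1 : s ≠ 1 := by rintro rfl; norm_num at hs
  refine mul_left_cancel₀ (sub_ne_zero.2 hs1) ?_
  rw [sub_one_mul_continuation ha hΔ hs1, subOneMulZeta_eq ha hΔ hs]

theorem completed_continuation {s : ℂ} (hs : Complex.Gamma s ≠ 0) :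
    (scale a b c : ℂ) ^ s * Complex.Gamma s * continuation ha hΔ s =
      xi ha hΔ s / (s * (s - 1)) := by
  rw [continuation, ← mul_div_assoc, completed_subOneMulZeta ha hΔ hs, div_div]

theorem continuation_functional_equation {s : ℂ} (hs : Complex.Gamma s ≠ 0)
    (hs' : Complex.Gamma (1 - s) ≠ 0) :
    (scale a b c : ℂ) ^ s * Complex.Gamma s * continuation ha hΔ s =
      (scale a b c : ℂ) ^ (1 - s) * Complex.Gamma (1 - s) * continuation ha hΔ (1 - s) := by
  rw [completed_continuation ha hΔ hs, completed_continuation ha hΔ hs', xi_one_sub]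
  congr 1
  ring

end Continuation

end EpsteinZeta

/-- The Epstein zeta function extends meromorphically to `ℂ` with a single simple pole
at `s = 1`, and satisfies the functional equation
`(√Δ/2π)^s Γ(s) Z_Q(s) = (√Δ/2π)^{1−s} Γ(1−s) Z_Q(1−s)` where `Δ = 4ac − b²`. -/
theorem stmt19 (a b c : ℝ) (ha : 0 < a) (hΔ : 0 < 4 * a * c - b ^ 2) :
    ∃ F : ℂ → ℂ,
      DifferentiableOn ℂ F {(1 : ℂ)}ᶜ ∧
      (∀ s : ℂ, 1 < s.re → F s = epsteinZetaC a b c s) ∧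
      (∃ G : ℂ → ℂ, Differentiable ℂ G ∧ (∀ s : ℂ, s ≠ 1 → G s = (s - 1) * F s) ∧
        G 1 ≠ 0) ∧
      ∀ s : ℂ, (∀ n : ℤ, s ≠ (n : ℂ)) →
        ((Real.sqrt (4 * a * c - b ^ 2) / (2 * Real.pi) : ℝ) : ℂ) ^ s *
            Complex.Gamma s * F s =
          ((Real.sqrt (4 * a * c - b ^ 2) / (2 * Real.pi) : ℝ) : ℂ) ^ (1 - s) *
            Complex.Gamma (1 - s) * F (1 - s) := by
  have hA : (EpsteinZeta.scale a b c : ℂ) ≠ 0 := mod_cast (EpsteinZeta.scale_pos hΔ).ne'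
  have hresidue : EpsteinZeta.subOneMulZeta ha hΔ 1 ≠ 0 :=
    EpsteinZeta.subOneMulZeta_one ha hΔ ▸ inv_ne_zero hA
  refine ⟨EpsteinZeta.continuation ha hΔ, EpsteinZeta.differentiableOn_continuation ha hΔ,
    fun s ↦ EpsteinZeta.continuation_eq_epsteinZetaC ha hΔ,
    ⟨EpsteinZeta.subOneMulZeta ha hΔ, EpsteinZeta.differentiable_subOneMulZeta ha hΔ,
      fun s hs ↦ (EpsteinZeta.sub_one_mul_continuation ha hΔ hs).symm, hresidue⟩, fun s hs ↦ ?_⟩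
  have hGamma : Complex.Gamma s ≠ 0 :=
    Complex.Gamma_ne_zero fun m h ↦ hs (-m) (by simpa using h)
  have hGamma' : Complex.Gamma (1 - s) ≠ 0 :=
    Complex.Gamma_ne_zero fun m h ↦ hs (1 + m) (by push_cast; linear_combination -h)
  exact EpsteinZeta.continuation_functional_equation ha hΔ hGamma hGamma'
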